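/- Let G be a finite simple graph on n vertices of girth at least 5, and let A be any Hermitian weighted adjacency matrix of G. Then n_{≥0}(A) ≥ n/4. -/

import Mathlib

open Matrix Finset

/-- A graph is `C4`-free if it has no cycle of length 4 as a (not necessarily induced)
subgraph: there are no four pairwise distinct vertices `a, b, c, d` with
`ab`, `bc`, `cd`, `da` all edges. -/
def C4Free {V : Type*} (G : SimpleGraph V) : Prop :=
  ∀ a b c d : V, a ≠ b → a ≠ c → a ≠ d → b ≠ c → b ≠ d → c ≠ d →
    G.Adj a b → G.Adj b c → G.Adj c d → ¬ G.Adj d a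


lemma scaling_exists {V : Type*} [Fintype V] (B : V → V → ℝ) (hB0 : ∀ i j, 0 ≤ B i j)
    (hBs : ∀ i j, B i j = B j i) (σ : Equiv.Perm V) (hσ : ∀ i, 0 < B i (σ i)) :
    ∃ y : V → ℝ, ∑ i, (∑ j, B i j * Real.exp (y i + y j) - 1) ^ 2 < 1 := by
  classical
  set f : (V → ℝ) → ℝ := fun y => (1/2) * (∑ i, ∑ j, B i j * Real.exp (y i + y j)) - ∑ i, y i with hf
  set L : ℝ := (1/2) * ∑ i, (1 + Real.log (B i (σ i))) with hL
  have hfL : ∀ y, L ≤ f y := by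
    intro y
    have h1 : ∑ i, (y i + y (σ i) + Real.log (B i (σ i)) + 1) ≤
        ∑ i, ∑ j, B i j * Real.exp (y i + y j) := by
      apply Finset.sum_le_sum
      intro i _
      calc _ ≤ Real.exp (y i + y (σ i) + Real.log (B i (σ i))) := Real.add_one_le_exp _
        _ = B i (σ i) * Real.exp (y i + y (σ i)) := by
            rw [Real.exp_add, Real.exp_log (hσ i)]; ring
        _ ≤ _ := Finset.single_le_sum (f := fun j => B i j * Real.exp (y i + y j))
            (fun j _ => mul_nonneg (hB0 i j) (Real.exp_pos _).le) (Finset.mem_univ (σ i))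
    have h2 : ∑ i, y (σ i) = ∑ i, y i := Equiv.sum_comp σ y
    simp only [Finset.sum_add_distrib, h2] at h1
    simp only [hf, hL, Finset.sum_add_distrib]
    linarith
  set C := f 0 - L with hC
  have hC0 : 0 ≤ C := sub_nonneg.2 (hfL 0)
  set δ : ℝ := 1 / (2 * C + 1) with hδ
  have hδ0 : 0 < δ := by positivity
  set g : (V → ℝ) → ℝ := fun y => f y + δ / 2 * ∑ i, y i ^ 2 with hg
  have hgc : Continuous g := by
    simp only [hg, hf]; fun_prop
  have hnorm : ∀ y : V → ℝ, ‖y‖ ^ 2 ≤ ∑ i, y i ^ 2 := by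
    intro y
    have hs : 0 ≤ ∑ i, y i ^ 2 := Finset.sum_nonneg fun i _ => sq_nonneg _
    have : ‖y‖ ≤ Real.sqrt (∑ i, y i ^ 2) := by
      rw [pi_norm_le_iff_of_nonneg (Real.sqrt_nonneg _)]
      intro i
      apply Real.abs_le_sqrt
      exact Finset.single_le_sum (f := fun i => y i ^ 2) (fun i _ => sq_nonneg _) (Finset.mem_univ i)
    calc ‖y‖ ^ 2 ≤ (Real.sqrt (∑ i, y i ^ 2)) ^ 2 := by gcongr
      _ = _ := Real.sq_sqrt hs
  obtain ⟨y, hy⟩ : ∃ y, ∀ z, g y ≤ g z := by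
    refine hgc.exists_forall_le' 0 ?_
    have ht := tendsto_norm_cocompact_atTop (E := V → ℝ)
    filter_upwards [ht.eventually_ge_atTop (2 * C / δ + 1)] with z hz
    have h0 : g 0 = f 0 := by simp [hg]
    have h1 : 2 * C / δ ≤ ‖z‖ ^ 2 := by
      have : 0 ≤ 2 * C / δ := by positivity
      nlinarith
    have h2 : 2 * C ≤ ‖z‖ ^ 2 * δ := by rwa [div_le_iff₀ hδ0] at h1
    have h3 := hnorm z
    have h4 := hfL z
    rw [h0]
    simp only [hg]
    nlinarith
  refine ⟨y, ?_⟩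
  set r : V → ℝ := fun i => ∑ j, B i j * Real.exp (y i + y j) with hr
  have hcrit : ∀ d : V → ℝ, ∑ i, d i * (r i - 1 + δ * y i) = 0 := by
    intro d
    have hder : HasDerivAt (fun s : ℝ => g (fun i => y i + s * d i))
        ((1/2) * (∑ i, ∑ j, B i j * (Real.exp ((y i + 0 * d i) + (y j + 0 * d j)) * (d i + d j)))
          - ∑ i, d i + δ / 2 * ∑ i, (2 * (y i + 0 * d i) * d i)) 0 := by
      simp only [hg, hf]
      have hl : ∀ i, HasDerivAt (fun s : ℝ => y i + s * d i) (d i) 0 := fun i => by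
        simpa using ((hasDerivAt_id (0:ℝ)).mul_const (d i)).const_add (y i)
      refine ((HasDerivAt.const_mul _ (HasDerivAt.fun_sum fun i _ => HasDerivAt.fun_sum fun j _ =>
        (((hl i).add (hl j)).exp).const_mul _)).sub (HasDerivAt.fun_sum fun i _ => hl i)).add
        (HasDerivAt.const_mul _ (HasDerivAt.fun_sum fun i _ => ?_))
      simpa using (hl i).fun_pow 2
    have hmin : IsLocalMin (fun s : ℝ => g (fun i => y i + s * d i)) 0 := by
      refine Filter.Eventually.of_forall fun s => ?_
      simpa using hy _
    have h0 := hmin.hasDerivAt_eq_zero hder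
    have e1 : ∑ i, ∑ j, B i j * (Real.exp (y i + y j) * (d i + d j)) = 2 * ∑ i, d i * r i := by
      have a1 : ∑ i, ∑ j, B i j * (Real.exp (y i + y j) * d i) = ∑ i, d i * r i := by
        simp only [hr, Finset.mul_sum]
        refine Finset.sum_congr rfl fun i _ => Finset.sum_congr rfl fun j _ => by ring
      have a2 : ∑ i, ∑ j, B i j * (Real.exp (y i + y j) * d j) = ∑ i, d i * r i := by
        rw [Finset.sum_comm, ← a1]
        refine Finset.sum_congr rfl fun i _ => Finset.sum_congr rfl fun j _ => ?_
        rw [hBs j i, add_comm (y j)]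
      simp only [mul_add, Finset.sum_add_distrib]
      rw [a1, a2]; ring
    simp only [zero_mul, add_zero] at h0
    rw [e1] at h0
    rw [← h0]
    simp only [mul_add, mul_sub, Finset.sum_add_distrib, Finset.sum_sub_distrib, Finset.mul_sum]
    rw [← Finset.sum_sub_distrib, ← Finset.sum_sub_distrib, ← Finset.sum_add_distrib, ← Finset.sum_add_distrib]
    refine Finset.sum_congr rfl fun i _ => by ring
  have hri : ∀ i, r i - 1 = - (δ * y i) := by
    intro i
    have := hcrit (Pi.single i 1)
    simp [Pi.single_apply] at this
    linarith
  have h1 : ∑ i, (r i - 1) ^ 2 = δ ^ 2 * ∑ i, y i ^ 2 := by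
    rw [Finset.mul_sum]
    refine Finset.sum_congr rfl fun i _ => by rw [hri]; ring
  have h2 : δ / 2 * ∑ i, y i ^ 2 ≤ C := by
    have a := hy 0
    have b : g 0 = f 0 := by simp [hg]
    have c := hfL y
    rw [b] at a
    simp only [hg] at a
    linarith
  have h3 : δ * (2 * C + 1) = 1 := by rw [hδ]; field_simp
  change ∑ i, (r i - 1) ^ 2 < 1
  rw [h1]
  nlinarith

/-- The Hermitian quadratic form. -/
noncomputable def qform {V : Type*} [Fintype V] (A : Matrix V V ℂ) (x : V → ℂ) : ℝ :=
  (star x ⬝ᵥ (A *ᵥ x)).re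

/-- Negative definiteness on a subspace. -/
def NegDefOn {V : Type*} [Fintype V] (A : Matrix V V ℂ) (W : Submodule ℂ (V → ℂ)) : Prop :=
  ∀ x ∈ W, x ≠ 0 → qform A x < 0

lemma herm_diag {V : Type*} [Fintype V] [DecidableEq V] (A : Matrix V V ℂ) (hA : A.IsHermitian) :
    ∃ U : Matrix V V ℂ, U * Uᴴ = 1 ∧ Uᴴ * U = 1 ∧
      A = U * diagonal (fun i => (hA.eigenvalues i : ℂ)) * Uᴴ := by
  refine ⟨hA.eigenvectorUnitary, ?_, ?_, ?_⟩
  · exact Unitary.mul_star_self_of_mem hA.eigenvectorUnitary.2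
  · exact Unitary.star_mul_self_of_mem hA.eigenvectorUnitary.2
  · conv_lhs => rw [hA.spectral_theorem]
    rw [Unitary.conjStarAlgAut_apply]
    rfl

lemma qform_diag {V : Type*} [Fintype V] [DecidableEq V] (U : Matrix V V ℂ) (l : V → ℝ) (x : V → ℂ) :
    qform (U * diagonal (fun i => (l i : ℂ)) * Uᴴ) x = ∑ i, l i * Complex.normSq ((Uᴴ *ᵥ x) i) := by
  unfold qform
  have : star x ⬝ᵥ ((U * diagonal (fun i => (l i : ℂ)) * Uᴴ) *ᵥ x) =
      star (Uᴴ *ᵥ x) ⬝ᵥ (diagonal (fun i => (l i : ℂ)) *ᵥ (Uᴴ *ᵥ x)) := by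
    rw [star_mulVec, conjTranspose_conjTranspose, ← dotProduct_mulVec, mulVec_mulVec, mulVec_mulVec]
  rw [this, dotProduct, Complex.re_sum]
  refine Finset.sum_congr rfl fun i _ => ?_
  rw [mulVec_diagonal]
  generalize (Uᴴ *ᵥ x) = z
  simp [Complex.normSq_apply]
  ring

lemma negDef_finrank_le {V : Type*} [Fintype V] [DecidableEq V] (A : Matrix V V ℂ)
    (hA : A.IsHermitian) (W : Submodule ℂ (V → ℂ)) (hW : NegDefOn A W) :
    Module.finrank ℂ W ≤ Fintype.card {i // ¬ 0 ≤ hA.eigenvalues i} := by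
  obtain ⟨U, hU1, hU2, hAU⟩ := herm_diag A hA
  let φ : W →ₗ[ℂ] ({i // ¬ 0 ≤ hA.eigenvalues i} → ℂ) :=
    (LinearMap.funLeft ℂ ℂ Subtype.val) ∘ₗ (Matrix.mulVecLin Uᴴ) ∘ₗ W.subtype
  have hφ : Function.Injective φ := by
    rw [← LinearMap.ker_eq_bot, LinearMap.ker_eq_bot']
    intro x hx
    by_contra hne
    have h1 := hW x.1 x.2 (by simpa using hne)
    rw [hAU, qform_diag] at h1
    refine absurd h1 (not_lt.2 (Finset.sum_nonneg fun i _ => ?_))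
    by_cases hi : 0 ≤ hA.eigenvalues i
    · exact mul_nonneg hi (Complex.normSq_nonneg _)
    · have := congrFun hx ⟨i, hi⟩
      have h2 : (Uᴴ *ᵥ x.1) i = 0 := this
      rw [h2]; simp
  have := LinearMap.finrank_le_finrank_of_injective hφ
  simpa using this

lemma exists_negDef {V : Type*} [Fintype V] [DecidableEq V] (A : Matrix V V ℂ)
    (hA : A.IsHermitian) : ∃ W : Submodule ℂ (V → ℂ), NegDefOn A W ∧
    Module.finrank ℂ W = Fintype.card {i // ¬ 0 ≤ hA.eigenvalues i} := by
  obtain ⟨U, hU1, hU2, hAU⟩ := herm_diag A hA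
  let E : ({i // ¬ 0 ≤ hA.eigenvalues i} → ℂ) →ₗ[ℂ] (V → ℂ) :=
    { toFun := fun z i => if h : ¬ 0 ≤ hA.eigenvalues i then z ⟨i, h⟩ else 0
      map_add' := by intro x y; ext i; simp only [Pi.add_apply]; split_ifs <;> simp
      map_smul' := by intro x y; ext i; by_cases h : 0 ≤ hA.eigenvalues i <;> simp [h] }
  have hE : ∀ z i, E z i = if h : ¬ 0 ≤ hA.eigenvalues i then z ⟨i, h⟩ else 0 := fun _ _ => rfl
  let ψ := (Matrix.mulVecLin U) ∘ₗ E
  have hUψ : ∀ z, Uᴴ *ᵥ (ψ z) = E z := by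
    intro z
    change Uᴴ *ᵥ (U *ᵥ E z) = _
    rw [mulVec_mulVec, hU2, one_mulVec]
  have hinj : Function.Injective ψ := by
    rw [← LinearMap.ker_eq_bot, LinearMap.ker_eq_bot']
    intro z hz
    have h := hUψ z
    rw [hz, mulVec_zero] at h
    ext i
    have := congrFun h.symm i.1
    rw [hE, dif_pos i.2] at this
    simpa using this
  refine ⟨LinearMap.range ψ, ?_, ?_⟩
  · rintro _ ⟨z, rfl⟩ hz
    have hz0 : ∃ j, z j ≠ 0 := by
      by_contra! hcon
      exact hz (by rw [show z = 0 from funext hcon, map_zero])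
    obtain ⟨j, hj⟩ := hz0
    rw [(congrArg (fun M => qform M (ψ z)) hAU).trans (qform_diag U _ (ψ z)), hUψ]
    have hnp : ∀ i, hA.eigenvalues i * Complex.normSq (E z i) ≤ 0 := by
      intro i
      by_cases h : 0 ≤ hA.eigenvalues i
      · simp [hE, h]
      · exact mul_nonpos_of_nonpos_of_nonneg (not_le.1 h).le (Complex.normSq_nonneg _)
    refine Finset.sum_neg' (fun i _ => hnp i) ⟨j.1, Finset.mem_univ _, ?_⟩
    rw [hE, dif_pos j.2]
    exact mul_neg_of_neg_of_pos (not_le.1 j.2) (Complex.normSq_pos.2 hj)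
  · rw [LinearMap.finrank_range_of_inj hinj]; simp

lemma trace_pow_eig {V : Type*} [Fintype V] [DecidableEq V] (A : Matrix V V ℂ)
    (hA : A.IsHermitian) (k : ℕ) : (A ^ k).trace = ((∑ i, hA.eigenvalues i ^ k : ℝ) : ℂ) := by
  conv_lhs => rw [hA.spectral_theorem]
  rw [← map_pow, Unitary.conjStarAlgAut_apply, Matrix.trace_mul_comm, ← mul_assoc]
  rw [Unitary.coe_star_mul_self, one_mul, diagonal_pow, trace_diagonal]
  simp

lemma poly_bound (x : ℝ) : (1/2) * x^2 - (1/8) * x^4 + (3/8 * Real.sqrt 2) * x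
    - (Real.sqrt 2 / 16) * x^3 ≤ if 0 ≤ x then 1 else 0 := by
  have hs : Real.sqrt 2 ^ 2 = 2 := Real.sq_sqrt (by norm_num)
  have hs0 : 0 < Real.sqrt 2 := by positivity
  set s := Real.sqrt 2
  split_ifs with h
  · have : 1 - ((1/2) * x^2 - (1/8) * x^4 + (3/8 * s) * x - (s / 16) * x^3) =
      (x - s)^2 * (x^2/8 + 5 * s / 16 * x + 1/2) := by
      have h3 : s^3 = 2 * s := by rw [pow_succ, hs]
      linear_combination (-(x^2/8) + x^2 *5/8 - 1/2) * hs - (5/16*x) * h3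
    have : 0 ≤ (x - s)^2 * (x^2/8 + 5 * s / 16 * x + 1/2) := by positivity
    linarith
  · push Not at h
    have : ((1/2) * x^2 - (1/8) * x^4 + (3/8 * s) * x - (s / 16) * x^3) =
      x * ((x + s)^2 * (3 * s / 16 - x/8)) := by
      have h3 : s^3 = 2 * s := by rw [pow_succ, hs]
      linear_combination (x^2/8 - x^2*3/8) * hs - (3/16*x) * h3
    rw [this]
    refine mul_nonpos_of_nonpos_of_nonneg h.le ?_
    apply mul_nonneg (sq_nonneg _)
    linarith

lemma count_bound {V : Type*} [Fintype V] [DecidableEq V] (A : Matrix V V ℂ)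
    (hA : A.IsHermitian) (h2 : ∀ a, A a a = 0)
    (h3 : ∀ a b c, A a b ≠ 0 → A b c ≠ 0 → A c a = 0)
    (h4 : ∀ a b c d, a ≠ c → b ≠ d → A a b ≠ 0 → A b c ≠ 0 → A c d ≠ 0 → A d a = 0) :
    (Fintype.card V : ℝ) - ∑ i, (∑ j, Complex.normSq (A i j) - 1) ^ 2 ≤
      4 * (Fintype.card {i // 0 ≤ hA.eigenvalues i} : ℝ) := by
  set r : V → ℝ := fun i => ∑ j, Complex.normSq (A i j) with hr
  have hsw : ∀ i j, A j i = star (A i j) := fun i j => (hA.apply j i).symm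
  have hnsw : ∀ i j, Complex.normSq (A j i) = Complex.normSq (A i j) := fun i j => by
    rw [hsw i j]; exact Complex.normSq_conj _
  have t1 : ∑ i, hA.eigenvalues i = 0 := by
    have := trace_pow_eig A hA 1
    rw [pow_one] at this
    have h0 : A.trace = 0 := Finset.sum_eq_zero fun i _ => h2 i
    rw [h0] at this
    simp only [pow_one] at this
    exact_mod_cast this.symm
  have t2 : ∑ i, hA.eigenvalues i ^ 2 = ∑ i, r i := by
    have := trace_pow_eig A hA 2
    have h0 : (A ^ 2).trace = ((∑ i, r i : ℝ) : ℂ) := by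
      rw [pow_two, Matrix.trace, Complex.ofReal_sum]
      refine Finset.sum_congr rfl fun i _ => ?_
      rw [diag_apply, mul_apply, Complex.ofReal_sum]
      refine Finset.sum_congr rfl fun j _ => ?_
      rw [hsw i j, Complex.normSq_eq_conj_mul_self, mul_comm]; rfl
    rw [h0] at this
    exact_mod_cast this.symm
  have t3 : ∑ i, hA.eigenvalues i ^ 3 = 0 := by
    have := trace_pow_eig A hA 3
    have h0 : (A ^ 3).trace = 0 := by
      rw [pow_succ, pow_two]
      refine Finset.sum_eq_zero fun i _ => ?_
      rw [diag_apply, mul_apply]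
      refine Finset.sum_eq_zero fun j _ => ?_
      rw [mul_apply, Finset.sum_mul]
      refine Finset.sum_eq_zero fun k _ => ?_
      by_cases ha : A i k = 0
      · simp [ha]
      by_cases hb : A k j = 0
      · simp [hb]
      rw [h3 i k j ha hb, mul_zero]
    rw [h0] at this
    exact_mod_cast this.symm
  have t4 : ∑ i, hA.eigenvalues i ^ 4 ≤ 2 * ∑ i, r i ^ 2 := by
    have := trace_pow_eig A hA 4
    have hA2 : (A ^ 2).IsHermitian := hA.pow 2
    have h0 : (A ^ 4).trace = ((∑ i, ∑ j, Complex.normSq ((A ^ 2) i j) : ℝ) : ℂ) := by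
      rw [show 4 = 2 + 2 from rfl, pow_add, Matrix.trace, Complex.ofReal_sum]
      refine Finset.sum_congr rfl fun i _ => ?_
      rw [diag_apply, mul_apply, Complex.ofReal_sum]
      refine Finset.sum_congr rfl fun j _ => ?_
      rw [← hA2.apply j i, Complex.normSq_eq_conj_mul_self, mul_comm]; rfl
    rw [h0] at this
    have h5 : ∑ i, hA.eigenvalues i ^ 4 = ∑ i, ∑ j, Complex.normSq ((A ^ 2) i j) := by
      exact_mod_cast this.symm
    rw [h5]
    have hb : ∀ i j, Complex.normSq ((A ^ 2) i j) ≤ (if i = j then r i ^ 2 else 0) +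
        ∑ k, Complex.normSq (A i k) * Complex.normSq (A k j) := by
      intro i j
      have hnn : 0 ≤ ∑ k, Complex.normSq (A i k) * Complex.normSq (A k j) :=
        Finset.sum_nonneg fun k _ => mul_nonneg (Complex.normSq_nonneg _) (Complex.normSq_nonneg _)
      split_ifs with hij
      · subst hij
        have : (A ^ 2) i i = (r i : ℂ) := by
          rw [pow_two, mul_apply, Complex.ofReal_sum]
          refine Finset.sum_congr rfl fun j _ => ?_
          rw [hsw i j, Complex.normSq_eq_conj_mul_self, mul_comm]; rfl
        rw [this, Complex.normSq_ofReal]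
        nlinarith
      · rw [zero_add, pow_two, mul_apply]
        by_cases hk : ∃ k, A i k * A k j ≠ 0
        · obtain ⟨k, hk⟩ := hk
          have hz : ∀ l, l ≠ k → A i l * A l j = 0 := by
            intro l hl
            by_contra hcon
            have a1 := left_ne_zero_of_mul hk
            have a2 := right_ne_zero_of_mul hk
            have a3 := left_ne_zero_of_mul hcon
            have a4 := right_ne_zero_of_mul hcon
            have := h4 i k j l hij hl.symm a1 a2 (by rw [hsw l j]; simpa using a4)
            rw [hsw i l] at this
            exact a3 (by simpa using this)
          rw [Finset.sum_eq_single k (fun l _ hl => hz l hl) (by simp), Complex.normSq_mul]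
          exact Finset.single_le_sum (f := fun k => Complex.normSq (A i k) * Complex.normSq (A k j))
            (fun k _ => mul_nonneg (Complex.normSq_nonneg _) (Complex.normSq_nonneg _))
            (Finset.mem_univ k)
        · push Not at hk
          rw [Finset.sum_eq_zero fun k _ => hk k]
          simpa using hnn
    calc _ ≤ ∑ i, ∑ j, ((if i = j then r i ^ 2 else 0) +
        ∑ k, Complex.normSq (A i k) * Complex.normSq (A k j)) :=
          Finset.sum_le_sum fun i _ => Finset.sum_le_sum fun j _ => hb i j
      _ = ∑ i, r i ^ 2 + ∑ i, ∑ j, ∑ k, Complex.normSq (A i k) * Complex.normSq (A k j) := by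
          simp only [Finset.sum_add_distrib]
          simp
      _ = ∑ i, r i ^ 2 + ∑ k, r k ^ 2 := by
          congr 1
          rw [Finset.sum_congr rfl fun i _ => Finset.sum_comm, Finset.sum_comm]
          refine Finset.sum_congr rfl fun k _ => ?_
          rw [pow_two]
          conv_rhs => rw [hr]
          rw [Finset.sum_mul_sum]
          refine Finset.sum_congr rfl fun i _ => Finset.sum_congr rfl fun j _ => ?_
          rw [hnsw k i]
      _ = _ := by ring
  have key := Finset.sum_le_sum (s := Finset.univ) fun i (_ : i ∈ Finset.univ) =>
    poly_bound (hA.eigenvalues i)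
  simp only [Finset.sum_add_distrib, Finset.sum_sub_distrib, ← Finset.mul_sum] at key
  rw [t1, t2, t3, ← Finset.sum_filter, Finset.sum_const, nsmul_one, ← Fintype.card_subtype] at key
  have e : ∑ i, (r i - 1) ^ 2 = ∑ i, r i ^ 2 - 2 * ∑ i, r i + Fintype.card V := by
    simp only [sub_sq, Finset.sum_add_distrib, Finset.sum_sub_distrib, ← Finset.mul_sum, mul_one]
    simp
  change (Fintype.card V : ℝ) - ∑ i, (r i - 1) ^ 2 ≤ _
  rw [e]
  linarith

lemma sum_eq_subtype {V : Type*} [Fintype V] (p : V → Prop) [DecidablePred p] (F : V → ℂ)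
    (h : ∀ i, ¬ p i → F i = 0) : ∑ i, F i = ∑ i : {i // p i}, F i := by
  rw [← Fintype.sum_subtype_add_sum_subtype p F]
  rw [Finset.sum_eq_zero (s := Finset.univ) (f := fun i : {i // ¬ p i} => F i) fun i _ => h i.1 i.2,
    add_zero]

lemma qform_eq_sum {V : Type*} [Fintype V] (A : Matrix V V ℂ) (x : V → ℂ) :
    qform A x = (∑ i, ∑ j, star (x i) * (A i j * x j)).re := by
  unfold qform
  simp only [dotProduct, mulVec, Finset.mul_sum]
  rfl

lemma qform_restrict {V : Type*} [Fintype V] (p : V → Prop) [DecidablePred p]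
    (A : Matrix V V ℂ) (x : V → ℂ) (h : ∀ i j, ¬ (p i ∧ p j) → star (x i) * (A i j * x j) = 0) :
    qform A x = qform (A.submatrix (Subtype.val : {i // p i} → V) Subtype.val)
      (fun i => x i.1) := by
  rw [qform_eq_sum, qform_eq_sum]
  congr 1
  rw [sum_eq_subtype p]
  · refine Finset.sum_congr rfl fun i _ => ?_
    rw [sum_eq_subtype p]
    · rfl
    · intro j hj
      exact h _ _ (fun hh => hj hh.2)
  · intro i hi
    exact Finset.sum_eq_zero fun j _ => h _ _ (fun hh => hi hh.1)

lemma scaled_case {V : Type} [Fintype V] [DecidableEq V] (A : Matrix V V ℂ)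
    (hA : A.IsHermitian) (h2 : ∀ a, A a a = 0)
    (h3 : ∀ a b c, A a b ≠ 0 → A b c ≠ 0 → A c a = 0)
    (h4 : ∀ a b c d, a ≠ c → b ≠ d → A a b ≠ 0 → A b c ≠ 0 → A c d ≠ 0 → A d a = 0)
    (σ : Equiv.Perm V) (hσ : ∀ i, A i (σ i) ≠ 0)
    (W : Submodule ℂ (V → ℂ)) (hW : NegDefOn A W) :
    4 * Module.finrank ℂ W ≤ 3 * Fintype.card V := by
  have hsw : ∀ i j, A j i = star (A i j) := fun i j => (hA.apply j i).symm
  have hnsw : ∀ i j, Complex.normSq (A i j) = Complex.normSq (A j i) := fun i j => by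
    rw [hsw i j]; exact (Complex.normSq_conj _).symm
  obtain ⟨y, hy⟩ := scaling_exists (fun i j => Complex.normSq (A i j))
    (fun i j => Complex.normSq_nonneg _) hnsw σ (fun i => Complex.normSq_pos.2 (hσ i))
  set c : V → ℝ := fun i => Real.exp (y i / 2) with hc
  have hc0 : ∀ i, (c i : ℂ) ≠ 0 := fun i => by
    exact_mod_cast (Real.exp_pos _).ne'
  have hcc : ∀ i, c i * c i = Real.exp (y i) := fun i => by
    rw [hc, ← Real.exp_add]; congr 1; ring
  let C : Matrix V V ℂ := Matrix.of fun i j => (c i : ℂ) * A i j * (c j : ℂ)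
  have hCa : ∀ i j, C i j = (c i : ℂ) * A i j * (c j : ℂ) := fun _ _ => rfl
  have hC0 : ∀ i j, C i j = 0 ↔ A i j = 0 := fun i j => by
    rw [hCa]; simp [hc0]
  have hC : C.IsHermitian := by
    ext i j
    rw [conjTranspose_apply, hCa, hCa, hsw i j]
    simp
    ring
  have hcount := count_bound C hC (fun a => (hC0 _ _).2 (h2 a))
    (fun a b c => by simp only [ne_eq, hC0]; exact h3 a b c)
    (fun a b c d => by simp only [ne_eq, hC0]; exact h4 a b c d)
  have hns : ∀ i, ∑ j, Complex.normSq (C i j) =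
      ∑ j, Complex.normSq (A i j) * Real.exp (y i + y j) := by
    intro i
    refine Finset.sum_congr rfl fun j _ => ?_
    rw [hCa, Complex.normSq_mul, Complex.normSq_mul, Complex.normSq_ofReal, Complex.normSq_ofReal,
      hcc, hcc, Real.exp_add]
    ring
  simp only [hns] at hcount
  have hnat : Fintype.card V ≤ 4 * Fintype.card {i // 0 ≤ hC.eigenvalues i} := by
    have : (Fintype.card V : ℝ) < ((4 * Fintype.card {i // 0 ≤ hC.eigenvalues i} + 1 : ℕ) : ℝ) := by
      push_cast
      linarith
    have := Nat.cast_lt.1 this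
    omega
  -- transport `W`
  let e : (V → ℂ) →ₗ[ℂ] (V → ℂ) :=
    { toFun := fun x i => (c i : ℂ)⁻¹ * x i
      map_add' := by intro x z; ext i; simp [mul_add]
      map_smul' := by intro a z; ext i; simp; ring }
  have hea : ∀ x i, e x i = (c i : ℂ)⁻¹ * x i := fun _ _ => rfl
  have he : Function.Injective e := by
    intro x z h
    ext i
    have := congrFun h i
    rw [hea, hea] at this
    exact mul_left_cancel₀ (inv_ne_zero (hc0 i)) this
  have hq : ∀ x, qform C (e x) = qform A x := by
    intro x
    rw [qform_eq_sum, qform_eq_sum]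
    congr 1
    refine Finset.sum_congr rfl fun i _ => Finset.sum_congr rfl fun j _ => ?_
    have a := hc0 i
    have b := hc0 j
    rw [hea, hea, hCa]
    simp only [star_mul', star_inv₀, RCLike.star_def, Complex.conj_ofReal]
    field_simp
  have hW' : NegDefOn C (W.map e) := by
    rintro _ ⟨x, hx, rfl⟩ hne
    rw [hq]
    exact hW x hx (fun h => hne (by rw [h, map_zero]))
  have h5 := negDef_finrank_le C hC _ hW'
  rw [← (Submodule.equivMapOfInjective e he W).finrank_eq] at h5
  rw [Fintype.card_subtype_compl] at h5
  have := Fintype.card_subtype_le (fun i => 0 ≤ hC.eigenvalues i)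
  omega

lemma main_neg (m : ℕ) : ∀ (V : Type) [Fintype V] [DecidableEq V], Fintype.card V = m →
    ∀ (A : Matrix V V ℂ), A.IsHermitian → (∀ a, A a a = 0) →
    (∀ a b c, A a b ≠ 0 → A b c ≠ 0 → A c a = 0) →
    (∀ a b c d, a ≠ c → b ≠ d → A a b ≠ 0 → A b c ≠ 0 → A c d ≠ 0 → A d a = 0) →
    ∀ W : Submodule ℂ (V → ℂ), NegDefOn A W → 4 * Module.finrank ℂ W ≤ 3 * m := by
  induction m using Nat.strong_induction_on with
  | _ m ih =>
  intro V _ _ hV A hA h2 h3 h4 W hW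
  have hsw : ∀ i j, A j i = star (A i j) := fun i j => (hA.apply j i).symm
  let t : V → Finset V := fun i => {j | A i j ≠ 0}
  have ht : ∀ i j, j ∈ t i ↔ A i j ≠ 0 := fun i j => by simp [t]
  by_cases hall : ∀ s : Finset V, s.card ≤ (s.biUnion t).card
  · obtain ⟨f, hf, hft⟩ := (Finset.all_card_le_biUnion_card_iff_exists_injective t).1 hall
    have hbij : Function.Bijective f := Finite.injective_iff_bijective.1 hf
    rw [← hV]
    exact scaled_case A hA h2 h3 h4 (Equiv.ofBijective f hbij) (fun i => (ht _ _).1 (hft i)) W hW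
  · push Not at hall
    obtain ⟨s, hs⟩ := hall
    set N := s.biUnion t with hN
    set S := s \ N with hS
    set T := N \ s with hT
    have hcard : T.card < S.card := by
      have a := Finset.card_sdiff_add_card_inter s N
      have b := Finset.card_sdiff_add_card_inter N s
      rw [Finset.inter_comm] at b
      rw [← hS] at a
      rw [← hT] at b
      omega
    have hST : ∀ i ∈ S, ∀ j, A i j ≠ 0 → j ∈ T := by
      intro i hi j hij
      rw [hS, Finset.mem_sdiff] at hi
      rw [hT, Finset.mem_sdiff]
      refine ⟨Finset.mem_biUnion.2 ⟨i, hi.1, (ht _ _).2 hij⟩, fun hj => hi.2 ?_⟩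
      refine Finset.mem_biUnion.2 ⟨j, hj, (ht _ _).2 ?_⟩
      rw [hsw i j]; simpa using hij
    have hdisj : Disjoint S T := Finset.disjoint_left.2 fun i hi hi' =>
      (Finset.mem_sdiff.1 hi).2 (Finset.mem_sdiff.1 hi').1
    let p : V → Prop := fun i => i ∉ S ∪ T
    have hpc : Fintype.card {i // p i} + S.card + T.card = m := by
      have a : Fintype.card {i // p i} = (S ∪ T)ᶜ.card := by
        rw [Fintype.card_subtype]; congr 1; ext i; simp [p]
      have b := Finset.card_compl_add_card (S ∪ T)
      rw [Finset.card_union_of_disjoint hdisj, hV] at b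
      omega
    let φ : W →ₗ[ℂ] ({i // i ∈ T} → ℂ) := (LinearMap.funLeft ℂ ℂ Subtype.val) ∘ₗ W.subtype
    have hφ : ∀ x : W, φ x = 0 → ∀ i ∈ T, x.1 i = 0 := fun x hx i hi => congrFun hx ⟨i, hi⟩
    let ρ : LinearMap.ker φ →ₗ[ℂ] ({i // p i} → ℂ) :=
      (LinearMap.funLeft ℂ ℂ Subtype.val) ∘ₗ W.subtype ∘ₗ (LinearMap.ker φ).subtype
    have hρa : ∀ x i, ρ x i = x.1.1 i.1 := fun _ _ => rfl
    set A' := A.submatrix (Subtype.val : {i // p i} → V) Subtype.val with hA'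
    have hq : ∀ x, qform A' (ρ x) = qform A x.1.1 := by
      intro x
      have hx : ∀ i ∈ T, x.1.1 i = 0 := hφ x.1 x.2
      symm
      apply qform_restrict p
      intro i j hij
      by_cases hiT : i ∈ T
      · simp [hx i hiT]
      by_cases hjT : j ∈ T
      · simp [hx j hjT]
      by_cases haij : A i j = 0
      · simp [haij]
      exfalso
      apply hij
      refine ⟨fun h => ?_, fun h => ?_⟩
      · rcases Finset.mem_union.1 h with h | h
        · exact hjT (hST i h j haij)
        · exact hiT h
      · rcases Finset.mem_union.1 h with h | h
        · exact hiT (hST j h i (by rw [hsw i j]; simpa using haij))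
        · exact hjT h
    have hneg : ∀ x : LinearMap.ker φ, x ≠ 0 → qform A' (ρ x) < 0 := by
      intro x hx
      rw [hq]
      exact hW _ x.1.2 (by simpa using hx)
    have hinj : Function.Injective ρ := by
      rw [injective_iff_map_eq_zero]
      intro x hx
      by_contra hne
      have := hneg x hne
      rw [hx] at this
      simp [qform] at this
    have hW' : NegDefOn A' (LinearMap.range ρ) := by
      rintro _ ⟨x, rfl⟩ hne
      exact hneg x (fun h => hne (by rw [h, map_zero]))
    have hrec := ih (Fintype.card {i // p i}) (by omega) {i // p i} rfl A' (hA.submatrix _)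
      (fun a => h2 a) (fun a b c => h3 a b c)
      (fun a b c d hac hbd => h4 a b c d (fun h => hac (Subtype.ext h)) (fun h => hbd (Subtype.ext h)))
      _ hW'
    rw [LinearMap.finrank_range_of_inj hinj] at hrec
    have hrk := LinearMap.finrank_range_add_finrank_ker φ
    have hrg : Module.finrank ℂ (LinearMap.range φ) ≤ T.card := by
      have := Submodule.finrank_le (LinearMap.range φ)
      simpa using this
    omega

/-- If `G` is a graph on `n` vertices of girth at least 5 (no cycles of length 3 or 4),
then every Hermitian weighted adjacency matrix of `G` has at least `n/4` non-negative
eigenvalues. -/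
theorem inertia_bound_girth_five (n : ℕ) (G : SimpleGraph (Fin n))
    (hC3 : ∀ a b c : Fin n, G.Adj a b → G.Adj b c → ¬ G.Adj c a)
    (hC4 : C4Free G)
    (A : Matrix (Fin n) (Fin n) ℂ) (hA : A.IsHermitian)
    (hsupp : ∀ i j, ¬ G.Adj i j → A i j = 0) :
    (n : ℝ) / 4 ≤ (Fintype.card {i : Fin n // 0 ≤ hA.eigenvalues i} : ℝ) := by
  have hadj : ∀ i j, A i j ≠ 0 → G.Adj i j := fun i j h => by
    by_contra h'
    exact h (hsupp i j h')
  obtain ⟨W, hW, hWc⟩ := exists_negDef A hA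
  have h := main_neg n (Fin n) (by simp) A hA (fun a => hsupp a a (by simp))
    (fun a b c hab hbc => hsupp _ _ (hC3 a b c (hadj _ _ hab) (hadj _ _ hbc)))
    (fun a b c d hac hbd hab hbc hcd => by
      by_contra hda
      have h1 := hadj _ _ hab
      have h2 := hadj _ _ hbc
      have h3 := hadj _ _ hcd
      have h4 := hadj _ _ hda
      exact hC4 a b c d h1.ne hac h4.ne.symm h2.ne hbd h3.ne h1 h2 h3 h4) W hW
  rw [hWc, Fintype.card_subtype_compl, Fintype.card_fin] at h
  have h' := Fintype.card_subtype_le (fun i => 0 ≤ hA.eigenvalues i)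
  rw [Fintype.card_fin] at h'
  have : n ≤ 4 * Fintype.card {i : Fin n // 0 ≤ hA.eigenvalues i} := by omega
  have : (n : ℝ) ≤ 4 * (Fintype.card {i : Fin n // 0 ≤ hA.eigenvalues i} : ℝ) := by
    exact_mod_cast this
  linarith
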